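/- Let (\tilde{X}_1,...,\tilde{X}_n) be i.i.d. and let S, W be finite discrete random variables with S independent of \tilde{X}^n. Then H(W) \ge I(S,W; \tilde{X}^n) + I(S;W) and consequently \log|\mathcal{W}| \ge \sum_{i=1}^n I(S, W, \tilde{X}^{i-1}; \tilde{X}_i), where W takes values in \mathcal{W}. -/

import Mathlib

open Finset Real

noncomputable section

variable {Ω : Type} [Fintype Ω]

/-- Probability that `X = x` under the pmf `p` on the finite sample space `Ω`. -/
def pr {α : Type} [DecidableEq α] (p : Ω → ℝ) (X : Ω → α) (x : α) : ℝ :=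
  ∑ ω, if X ω = x then p ω else 0

/-- Shannon entropy (in nats) of a random variable `X`. -/
def ent {α : Type} [Fintype α] [DecidableEq α] (p : Ω → ℝ) (X : Ω → α) : ℝ :=
  ∑ x, Real.negMulLog (pr p X x)

/-- Conditional Shannon entropy `H(X | Y)`. -/
def condEnt {α β : Type} [Fintype α] [Fintype β] [DecidableEq α] [DecidableEq β]
    (p : Ω → ℝ) (X : Ω → α) (Y : Ω → β) : ℝ :=
  ent p (fun ω => (X ω, Y ω)) - ent p Y

/-- Mutual information `I(X; Y)`. -/
def mi {α β : Type} [Fintype α] [Fintype β] [DecidableEq α] [DecidableEq β]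
    (p : Ω → ℝ) (X : Ω → α) (Y : Ω → β) : ℝ :=
  ent p X + ent p Y - ent p (fun ω => (X ω, Y ω))

/-- Conditional mutual information `I(X; Y | Z)`. -/
def condMI {α β γ : Type} [Fintype α] [Fintype β] [Fintype γ]
    [DecidableEq α] [DecidableEq β] [DecidableEq γ]
    (p : Ω → ℝ) (X : Ω → α) (Y : Ω → β) (Z : Ω → γ) : ℝ :=
  condEnt p X Z - condEnt p X (fun ω => (Y ω, Z ω))

/-- `p` is a probability mass function. -/
def IsPMF (p : Ω → ℝ) : Prop := (∀ ω, 0 ≤ p ω) ∧ ∑ ω, p ω = 1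

/-- `X` and `Y` are independent random variables. -/
def IndepRV {α β : Type} [DecidableEq α] [DecidableEq β]
    (p : Ω → ℝ) (X : Ω → α) (Y : Ω → β) : Prop :=
  ∀ x y, pr p (fun ω => (X ω, Y ω)) (x, y) = pr p X x * pr p Y y

/-- `X` and `Y` are conditionally independent given `Z` (Markov chain `X - Z - Y`). -/
def CondIndep {α β γ : Type} [DecidableEq α] [DecidableEq β] [DecidableEq γ]
    (p : Ω → ℝ) (X : Ω → α) (Y : Ω → β) (Z : Ω → γ) : Prop :=
  ∀ x y z, pr p (fun ω => ((X ω, Y ω), Z ω)) ((x, y), z) * pr p Z z =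
    pr p (fun ω => (X ω, Z ω)) (x, z) * pr p (fun ω => (Y ω, Z ω)) (y, z)

/-- `X` is uniformly distributed on its (finite) alphabet. -/
def UniformRV {α : Type} [Fintype α] [DecidableEq α] (p : Ω → ℝ) (X : Ω → α) : Prop :=
  ∀ x, pr p X x = 1 / (Fintype.card α : ℝ)

lemma sum_mul_comp_eq {α : Type} [Fintype α] [DecidableEq α]
    (p : Ω → ℝ) (X : Ω → α) (g : α → ℝ) :
    ∑ ω, p ω * g (X ω) = ∑ x, pr p X x * g x := by
  simp only [pr, Finset.sum_mul, ite_mul, zero_mul]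
  rw [Finset.sum_comm]
  simp

lemma sum_pr {α : Type} [Fintype α] [DecidableEq α] (p : Ω → ℝ) (X : Ω → α) :
    ∑ x, pr p X x = ∑ ω, p ω := by
  simpa using (sum_mul_comp_eq p X fun _ => 1).symm

/-- Entropy as the expectation of the self-information. -/
lemma ent_eq_neg_sum {α : Type} [Fintype α] [DecidableEq α] (p : Ω → ℝ) (X : Ω → α) :
    ent p X = -∑ ω, p ω * Real.log (pr p X (X ω)) := by
  rw [sum_mul_comp_eq p X fun x => Real.log (pr p X x)]
  simp [ent, Real.negMulLog]

lemma pr_nonneg {α : Type} [DecidableEq α] {p : Ω → ℝ} (hp : ∀ ω, 0 ≤ p ω)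
    (X : Ω → α) (x : α) : 0 ≤ pr p X x :=
  Finset.sum_nonneg fun ω _ => by split_ifs <;> simp [hp ω]

lemma le_pr_apply {α : Type} [DecidableEq α] {p : Ω → ℝ} (hp : ∀ ω, 0 ≤ p ω)
    (X : Ω → α) (ω : Ω) : p ω ≤ pr p X (X ω) := by
  have h := Finset.single_le_sum (f := fun ω' => if X ω' = X ω then p ω' else 0)
    (fun ω' _ => by split_ifs <;> simp [hp ω']) (Finset.mem_univ ω)
  simpa [pr] using h

lemma ent_congr {α β : Type} [Fintype α] [DecidableEq α] [Fintype β] [DecidableEq β]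
    (p : Ω → ℝ) (X : Ω → α) (Y : Ω → β) (h : ∀ ω ω', X ω = X ω' ↔ Y ω = Y ω') :
    ent p X = ent p Y := by
  simp only [ent_eq_neg_sum, pr, h]

lemma ent_le_ent {α β : Type} [Fintype α] [DecidableEq α] [Fintype β] [DecidableEq β]
    {p : Ω → ℝ} (hp : ∀ ω, 0 ≤ p ω) (X : Ω → α) (Y : Ω → β)
    (h : ∀ ω ω', Y ω = Y ω' → X ω = X ω') :
    ent p X ≤ ent p Y := by
  rw [ent_eq_neg_sum, ent_eq_neg_sum, neg_le_neg_iff]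
  refine Finset.sum_le_sum fun ω _ => ?_
  rcases (hp ω).eq_or_lt with h0 | h0
  · simp [← h0]
  refine mul_le_mul_of_nonneg_left
    (Real.log_le_log (h0.trans_le (le_pr_apply hp Y ω)) ?_) h0.le
  refine Finset.sum_le_sum fun ω' _ => ?_
  by_cases hY : Y ω' = Y ω
  · simp [hY, h _ _ hY]
  · rw [if_neg hY]
    split_ifs <;> simp [hp ω']

/-- The Gibbs inequality, for a subprobability weight `b`. -/
lemma ent_le_neg_sum_mul_log {α : Type} [Fintype α] [DecidableEq α] {p : Ω → ℝ} (hp : IsPMF p)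
    (X : Ω → α) (b : α → ℝ) (hb : ∀ x, 0 ≤ b x) (hb1 : ∑ x, b x ≤ 1)
    (hpos : ∀ ω, 0 < p ω → 0 < b (X ω)) :
    ent p X ≤ -∑ ω, p ω * Real.log (b (X ω)) := by
  have key : ∑ ω, p ω * (Real.log (b (X ω)) - Real.log (pr p X (X ω))) ≤
      ∑ ω, p ω * (b (X ω) / pr p X (X ω) - 1) := by
    refine Finset.sum_le_sum fun ω _ => ?_
    rcases (hp.1 ω).eq_or_lt with h0 | h0
    · simp [← h0]
    have h1 := h0.trans_le (le_pr_apply hp.1 X ω)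
    have h2 := hpos ω h0
    rw [← Real.log_div h2.ne' h1.ne']
    exact mul_le_mul_of_nonneg_left (Real.log_le_sub_one_of_pos (div_pos h2 h1)) h0.le
  have hle : ∑ ω, p ω * (b (X ω) / pr p X (X ω)) ≤ 1 := by
    rw [sum_mul_comp_eq p X fun x => b x / pr p X x]
    refine (Finset.sum_le_sum fun x _ => ?_).trans hb1
    rcases (pr_nonneg hp.1 X x).eq_or_lt with h0 | h0
    · simp [← h0, hb x]
    · rw [mul_div_cancel₀ _ h0.ne']
  simp only [mul_sub, Finset.sum_sub_distrib, mul_one, hp.2] at key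
  rw [ent_eq_neg_sum]
  linarith

lemma ent_le_log_card {α : Type} [Fintype α] [DecidableEq α] {p : Ω → ℝ} (hp : IsPMF p)
    (X : Ω → α) : ent p X ≤ Real.log (Fintype.card α) := by
  have hcard (ω : Ω) : (0 : ℝ) < Fintype.card α := by
    exact_mod_cast Fintype.card_pos_iff.2 ⟨X ω⟩
  have h := ent_le_neg_sum_mul_log hp X (fun _ => (Fintype.card α : ℝ)⁻¹)
    (fun _ => by positivity) (by simpa using mul_inv_le_one) (fun ω _ => inv_pos.2 (hcard ω))
  simpa [← Finset.sum_mul, hp.2] using h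

lemma mi_nonneg {α β : Type} [Fintype α] [DecidableEq α] [Fintype β] [DecidableEq β]
    {p : Ω → ℝ} (hp : IsPMF p) (X : Ω → α) (Y : Ω → β) : 0 ≤ mi p X Y := by
  have hX (ω : Ω) (h : 0 < p ω) := h.trans_le (le_pr_apply hp.1 X ω)
  have hY (ω : Ω) (h : 0 < p ω) := h.trans_le (le_pr_apply hp.1 Y ω)
  have h := ent_le_neg_sum_mul_log hp (fun ω => (X ω, Y ω)) (fun z => pr p X z.1 * pr p Y z.2)
    (fun z => mul_nonneg (pr_nonneg hp.1 X _) (pr_nonneg hp.1 Y _))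
    (by rw [Fintype.sum_prod_type]; simp [← Finset.mul_sum, sum_pr, hp.2])
    (fun ω h => mul_pos (hX ω h) (hY ω h))
  have hlog : ∑ ω, p ω * Real.log (pr p X (X ω) * pr p Y (Y ω)) =
      ∑ ω, p ω * Real.log (pr p X (X ω)) + ∑ ω, p ω * Real.log (pr p Y (Y ω)) := by
    rw [← Finset.sum_add_distrib]
    refine Finset.sum_congr rfl fun ω _ => ?_
    rcases (hp.1 ω).eq_or_lt with h0 | h0
    · simp [← h0]
    · rw [Real.log_mul (hX ω h0).ne' (hY ω h0).ne', mul_add]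
  rw [mi, ent_eq_neg_sum p X, ent_eq_neg_sum p Y]
  linarith

lemma IndepRV.ent_prodMk {α β : Type} [Fintype α] [DecidableEq α] [Fintype β] [DecidableEq β]
    {p : Ω → ℝ} (hp : ∀ ω, 0 ≤ p ω) {X : Ω → α} {Y : Ω → β} (h : IndepRV p X Y) :
    ent p (fun ω => (X ω, Y ω)) = ent p X + ent p Y := by
  rw [ent_eq_neg_sum, ent_eq_neg_sum p X, ent_eq_neg_sum p Y, ← neg_add,
    ← Finset.sum_add_distrib]
  congr 1
  refine Finset.sum_congr rfl fun ω _ => ?_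
  rcases (hp ω).eq_or_lt with h0 | h0
  · simp [← h0]
  · rw [h, Real.log_mul (h0.trans_le (le_pr_apply hp X ω)).ne'
      (h0.trans_le (le_pr_apply hp Y ω)).ne', mul_add]

/-- Marginals of a product distribution; the factor need not be normalized in advance. -/
lemma pr_coord_eq {α ι : Type} [Fintype α] [DecidableEq α] [Fintype ι] [DecidableEq ι]
    {p : Ω → ℝ} (hp : IsPMF p) (X : Ω → ι → α) (q : α → ℝ)
    (hiid : ∀ v, pr p X v = ∏ i, q (v i)) (i : ι) (x : α) :
    pr p (fun ω => X ω i) x = |q x| := by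
  have habs (v : ι → α) : pr p X v = ∏ j, |q (v j)| := by
    rw [← Finset.abs_prod, ← hiid, abs_of_nonneg (pr_nonneg hp.1 X v)]
  have hsum : ∑ a, |q a| = 1 := by
    have h : (∑ a, |q a|) ^ Fintype.card ι = 1 := by
      rw [← hp.2, ← sum_pr p X]
      simp_rw [habs]
      rw [← Fintype.prod_sum fun (_ : ι) a => |q a|]
      simp
    exact (pow_eq_one_iff_of_nonneg (Finset.sum_nonneg fun _ _ => abs_nonneg _)
      (Fintype.card_pos_iff.2 ⟨i⟩).ne').1 h
  have h1 : pr p (fun ω => X ω i) x = ∑ v, pr p X v * if v i = x then 1 else 0 := by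
    rw [← sum_mul_comp_eq p X fun v => if v i = x then 1 else 0]
    simp [pr]
  have h2 (v : ι → α) : (pr p X v * if v i = x then 1 else 0) =
      ∏ j, if j = i then (if v j = x then |q (v j)| else 0) else |q (v j)| := by
    rw [habs, ← Finset.mul_prod_erase _ _ (Finset.mem_univ i),
      ← Finset.mul_prod_erase univ (fun j => if j = i then _ else _) (Finset.mem_univ i),
      Finset.prod_congr rfl fun j hj => if_neg (Finset.ne_of_mem_erase hj)]
    split_ifs <;> simp_all
  simp_rw [h1, h2]
  rw [← Fintype.prod_sum fun j a => if j = i then (if a = x then |q a| else 0) else |q a|,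
    ← Finset.mul_prod_erase _ _ (Finset.mem_univ i), Finset.prod_eq_one]
  · simp
  · intro j hj
    simp [Finset.ne_of_mem_erase hj, hsum]

lemma ent_pi_eq_sum {α ι : Type} [Fintype α] [DecidableEq α] [Fintype ι] [DecidableEq ι]
    {p : Ω → ℝ} (hp : IsPMF p) (X : Ω → ι → α) (q : α → ℝ)
    (hiid : ∀ v, pr p X v = ∏ i, q (v i)) :
    ent p X = ∑ i, ent p (fun ω => X ω i) := by
  simp only [ent_eq_neg_sum, Finset.sum_neg_distrib]
  rw [Finset.sum_comm]
  congr 1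
  refine Finset.sum_congr rfl fun ω _ => ?_
  rcases (hp.1 ω).eq_or_lt with h0 | h0
  · simp [← h0]
  have hne := (h0.trans_le (le_pr_apply hp.1 X ω)).ne'
  rw [hiid] at hne ⊢
  rw [Real.log_prod fun i _ => Finset.prod_ne_zero_iff.1 hne i (Finset.mem_univ i),
    Finset.mul_sum]
  simp only [pr_coord_eq hp X q hiid, Real.log_abs]

/-- The chain rule for mutual information, before identifying the entropies of the coordinates
with the joint entropy. -/
lemma sum_mi_prefix {α 𝒯 : Type} [Fintype α] [DecidableEq α] [Fintype 𝒯] [DecidableEq 𝒯]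
    {n : ℕ} (p : Ω → ℝ) (X : Ω → Fin n → α) (T : Ω → 𝒯) :
    ∑ i : Fin n,
      mi p (fun ω => (T ω, fun j : Fin i.val => X ω ⟨j.1, j.2.trans i.isLt⟩)) (fun ω => X ω i) =
    ent p T + ∑ i, ent p (fun ω => X ω i) - ent p (fun ω => (T ω, X ω)) := by
  let f : ℕ → ℝ := fun k => ent p fun ω =>
    (T ω, fun j : Fin k => if h : j.1 < n then some (X ω ⟨j.1, h⟩) else none)
  have h0 : f 0 = ent p T := ent_congr p _ _ fun ω ω' => by
    simp only [Prod.mk.injEq, and_iff_left_iff_imp]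
    exact fun _ => funext fun j => j.elim0
  have hn : f n = ent p (fun ω => (T ω, X ω)) := ent_congr p _ _ fun ω ω' => by
    simp [funext_iff]
  have hstep (i : Fin n) :
      mi p (fun ω => (T ω, fun j : Fin i.val => X ω ⟨j.1, j.2.trans i.isLt⟩)) (fun ω => X ω i) =
        ent p (fun ω => X ω i) - (f (i.val + 1) - f i.val) := by
    have h1 : ent p (fun ω => (T ω, fun j : Fin i.val => X ω ⟨j.1, j.2.trans i.isLt⟩)) =
        f i.val := ent_congr p _ _ fun ω ω' => by
      have hlt (j : Fin i.val) : j.1 < n := j.2.trans i.isLt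
      simp [funext_iff, hlt]
    have h2 : ent p (fun ω =>
        ((T ω, fun j : Fin i.val => X ω ⟨j.1, j.2.trans i.isLt⟩), X ω i)) =
        f (i.val + 1) := ent_congr p _ _ fun ω ω' => by
      have hlt (j : Fin i.val) : j.1 < n := j.2.trans i.isLt
      simp [funext_iff, Fin.forall_fin_succ', hlt, and_assoc]
    rw [mi, h1, h2]
    ring
  simp only [hstep, Finset.sum_sub_distrib]
  rw [← h0, ← hn, ← Finset.sum_sub_distrib, Fin.sum_univ_eq_sum_range (fun k => f (k + 1) - f k) n,
    Finset.sum_range_sub]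
  ring

/-- Storage-rate converse bound (25) for the chosen-secret model. -/
theorem stmt5 {α 𝒮 𝒲 : Type} [Fintype α] [DecidableEq α]
    [Fintype 𝒮] [DecidableEq 𝒮] [Fintype 𝒲] [DecidableEq 𝒲]
    (n : ℕ) (p : Ω → ℝ) (hp : IsPMF p)
    (Xt : Ω → Fin n → α) (S : Ω → 𝒮) (W : Ω → 𝒲)
    (q : α → ℝ) (hiid : ∀ v : Fin n → α, pr p Xt v = ∏ i, q (v i))
    (hind : IndepRV p S Xt) :
    ent p W ≥ mi p (fun ω => (S ω, W ω)) Xt + mi p S W ∧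
    Real.log (Fintype.card 𝒲) ≥
      ∑ i : Fin n,
        mi p (fun ω => (S ω, W ω, fun j : Fin i.val => Xt ω ⟨j.1, j.2.trans i.isLt⟩))
          (fun ω => Xt ω i) := by
  have hfst : ent p W ≥ mi p (fun ω => (S ω, W ω)) Xt + mi p S W := by
    have h1 := hind.ent_prodMk hp.1
    have h2 : ent p (fun ω => (S ω, Xt ω)) ≤ ent p (fun ω => ((S ω, W ω), Xt ω)) :=
      ent_le_ent hp.1 _ _ fun ω ω' h => by simp_all
    simp only [mi]
    linarith
  refine ⟨hfst, ?_⟩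
  have hassoc (i : Fin n) :
      mi p (fun ω => (S ω, W ω, fun j : Fin i.val => Xt ω ⟨j.1, j.2.trans i.isLt⟩))
          (fun ω => Xt ω i) =
        mi p (fun ω => ((S ω, W ω), fun j : Fin i.val => Xt ω ⟨j.1, j.2.trans i.isLt⟩))
          (fun ω => Xt ω i) := by
    unfold mi
    congr 1
    · congr 1
      exact ent_congr p _ _ fun ω ω' => by simp [and_assoc]
    · exact ent_congr p _ _ fun ω ω' => by simp [and_assoc]
  rw [Finset.sum_congr rfl fun i _ => hassoc i, sum_mi_prefix p Xt fun ω => (S ω, W ω),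
    ← ent_pi_eq_sum hp Xt q hiid]
  have hW := ent_le_log_card hp W
  have hSW := mi_nonneg hp S W
  rw [mi] at hfst
  linarith
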